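/- arXiv:1802.01577 — 2 statements merged into one kernel-verified Lean document; each statement's English description precedes it below -/
import Mathlib

section
/- (Theorem 1.1) Let M be a compact connected metric measure space with μ(M)=1 and diam M=1 satisfying Conditions A and B, and suppose that for all sufficiently large m there exist partitions of M into m sets of measure 1/m and diameter at most c₈ m^{−1/d}. Then there is a constant c₃ > 0 such that for every N ≥ 1, every 0 < p < ∞, and every Borel probability measure ξ on [0,1], there exists an N-point set D_N ⊂ M with L_p-discrepancy L_p[ξ, D_N] = (∫_M ∫_0^1 |L[B(y,r), D_N]|^p dμ(y) dξ(r))^{1/p} ≤ c₃ (p+1)^{1/2} N^{1/2 − 1/(2d)}. -/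
open MeasureTheory Metric Set

/-- The volume of the metric ball, with the convention `v(y,r) = 1` for `r ≥ 1`. -/
noncomputable def vol {M : Type*} [MetricSpace M] [MeasurableSpace M]
    (μ : MeasureTheory.Measure M) (y : M) (r : ℝ) : ℝ :=
  if 1 ≤ r then 1 else (μ (Metric.ball y r)).toReal

/-- Exponential moment of a sum of independent centered indicators. -/
lemma exp_moment {M : Type*} [MeasurableSpace M] {N : ℕ} (ν : Fin N → Measure M)
    [∀ i, IsProbabilityMeasure (ν i)] (B : Set M) (hB : MeasurableSet B)
    (T : Finset (Fin N)) (hT : ∀ i, i ∉ T → ∀ᵐ x ∂(ν i), B.indicator (1 : M → ℝ) x = (ν i).real B)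
    (K : ℝ) (hTK : (T.card : ℝ) ≤ K) (t : ℝ) :
    ∫ ω, Real.exp (t * ∑ i, (B.indicator (1 : M → ℝ) (ω i) - (ν i).real B)) ∂(Measure.pi ν)
      ≤ Real.exp (K * t ^ 2 / 2) := by
  have h1 : ∀ ω : Fin N → M, Real.exp (t * ∑ i, (B.indicator (1 : M → ℝ) (ω i) - (ν i).real B))
      = ∏ i, Real.exp (t * (B.indicator (1 : M → ℝ) (ω i) - (ν i).real B)) := by
    intro ω
    rw [Finset.mul_sum, Real.exp_sum]
  simp_rw [h1]
  rw [integral_fintype_prod_eq_prod (𝕜 := ℝ)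
    (f := fun i x => Real.exp (t * (B.indicator (1 : M → ℝ) x - (ν i).real B)))]
  have h2 : ∀ i, ∫ x, Real.exp (t * (B.indicator (1 : M → ℝ) x - (ν i).real B)) ∂(ν i)
      ≤ if i ∈ T then Real.exp (t ^ 2 / 2) else 1 := by
    intro i
    split_ifs with h
    · have hh := ProbabilityTheory.hasSubgaussianMGF_of_mem_Icc (μ := ν i)
        (X := B.indicator (1 : M → ℝ)) (a := 0) (b := 1)
        ((measurable_one.indicator hB).aemeasurable)
        (Filter.Eventually.of_forall fun x => by
          by_cases hx : x ∈ B <;> simp [hx])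
      have := hh.mgf_le t
      rw [integral_indicator_one hB] at this
      unfold ProbabilityTheory.mgf at this
      refine this.trans ?_
      apply Real.exp_le_exp.2
      simp
      nlinarith [sq_nonneg t]
    · have : ∫ x, Real.exp (t * (B.indicator (1 : M → ℝ) x - (ν i).real B)) ∂(ν i)
          = ∫ x, (1 : ℝ) ∂(ν i) := by
        apply integral_congr_ae
        filter_upwards [hT i h] with x hx
        rw [hx]; simp
      rw [this]; simp
  calc _ ≤ ∏ i, (if i ∈ T then Real.exp (t ^ 2 / 2) else 1) :=
        Finset.prod_le_prod (fun i _ => integral_nonneg fun x => (Real.exp_pos _).le)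
          (fun i _ => h2 i)
    _ = Real.exp (t ^ 2 / 2) ^ T.card := by
        rw [Finset.prod_ite_mem]; simp
    _ = Real.exp (T.card * (t ^ 2 / 2)) := by rw [Real.exp_nat_mul]
    _ ≤ _ := by
        apply Real.exp_le_exp.2
        nlinarith [sq_nonneg t]

lemma moment_bound_ge {Ω : Type*} [MeasurableSpace Ω] (P : Measure Ω) [IsProbabilityMeasure P]
    (S : Ω → ℝ) (hS : Measurable S) (C : ℝ) (hC : ∀ ω, |S ω| ≤ C) (K : ℝ) (hK : 0 < K)
    (hexp : ∀ t : ℝ, ∫ ω, Real.exp (t * S ω) ∂P ≤ Real.exp (K * t ^ 2 / 2))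
    (p : ℝ) (hp : 1 ≤ p) :
    ∫ ω, |S ω| ^ p ∂P ≤ (2 * Real.exp (1/2) * Real.sqrt (p * K)) ^ p := by
  have hp0 : 0 < p := by linarith
  have hint : ∀ t : ℝ, Integrable (fun ω => Real.exp (t * S ω)) P := by
    intro t
    refine Integrable.of_bound (by fun_prop) (Real.exp (|t| * C)) (Filter.Eventually.of_forall ?_)
    intro ω
    rw [Real.norm_eq_abs, abs_of_pos (Real.exp_pos _)]
    apply Real.exp_le_exp.2
    calc t * S ω ≤ |t * S ω| := le_abs_self _
      _ = |t| * |S ω| := abs_mul _ _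
      _ ≤ _ := by gcongr; exact hC ω
  set l := Real.sqrt (p / K) with hl
  have hl0 : 0 < l := Real.sqrt_pos.2 (by positivity)
  have hl2 : l ^ 2 = p / K := Real.sq_sqrt (by positivity)
  have hpl : p / l = Real.sqrt (p * K) := by
    symm
    rw [Real.sqrt_eq_iff_mul_self_eq_of_pos (by positivity), ← sq, div_pow, hl2]
    field_simp
  have hpt : ∀ ω, |S ω| ^ p ≤ (p / l) ^ p * (Real.exp (l * S ω) + Real.exp (-l * S ω)) := by
    intro ω
    have h1 : |S ω| ≤ (p / l) * Real.exp (l * |S ω| / p) := by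
      have := Real.add_one_le_exp (l * |S ω| / p)
      calc |S ω| = (p / l) * (l * |S ω| / p) := by field_simp
        _ ≤ _ := by gcongr; linarith
    calc |S ω| ^ p ≤ ((p / l) * Real.exp (l * |S ω| / p)) ^ p := by gcongr
      _ = (p / l) ^ p * Real.exp (l * |S ω|) := by
        rw [Real.mul_rpow (by positivity) (by positivity), ← Real.exp_mul]
        congr 2; field_simp
      _ ≤ _ := by
        gcongr
        rcases abs_cases (S ω) with ⟨h, _⟩ | ⟨h, _⟩ <;> rw [h]
        · linarith [Real.exp_pos (-l * S ω)]
        · have : l * -S ω = -l * S ω := by ring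
          rw [this]; linarith [Real.exp_pos (l * S ω)]
  calc ∫ ω, |S ω| ^ p ∂P ≤ ∫ ω, (p / l) ^ p * (Real.exp (l * S ω) + Real.exp (-l * S ω)) ∂P := by
        apply integral_mono_of_nonneg (Filter.Eventually.of_forall fun ω => by positivity)
          (((hint l).add (hint (-l))).const_mul _) (Filter.Eventually.of_forall hpt)
    _ = (p / l) ^ p * (∫ ω, Real.exp (l * S ω) ∂P + ∫ ω, Real.exp (-l * S ω) ∂P) := by
        rw [integral_const_mul, integral_add (hint l) (hint (-l))]
    _ ≤ (p / l) ^ p * (Real.exp (K * l ^ 2 / 2) + Real.exp (K * (-l) ^ 2 / 2)) := by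
        gcongr
        · exact hexp l
        · exact hexp (-l)
    _ = 2 * Real.exp (p / 2) * (p / l) ^ p := by
        rw [neg_sq, hl2]
        have : K * (p / K) / 2 = p / 2 := by field_simp
        rw [this]; ring
    _ ≤ 2 ^ p * Real.exp (p / 2) * (p / l) ^ p := by
        gcongr
        conv_lhs => rw [← Real.rpow_one 2]
        exact Real.rpow_le_rpow_of_exponent_le (by norm_num) hp
    _ = _ := by
        rw [hpl, Real.mul_rpow (by positivity) (by positivity),
          Real.mul_rpow (by positivity) (by positivity), ← Real.exp_mul]
        congr 3; ring

lemma moment_bound {Ω : Type*} [MeasurableSpace Ω] (P : Measure Ω) [IsProbabilityMeasure P]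
    (S : Ω → ℝ) (hS : Measurable S) (C : ℝ) (hC : ∀ ω, |S ω| ≤ C) (K : ℝ) (hK : 0 < K)
    (hexp : ∀ t : ℝ, ∫ ω, Real.exp (t * S ω) ∂P ≤ Real.exp (K * t ^ 2 / 2))
    (p : ℝ) (hp0 : 0 < p) :
    ∫ ω, |S ω| ^ p ∂P ≤ (2 * Real.exp (1/2) * Real.sqrt ((p + 1) * K)) ^ p := by
  rcases le_total 1 p with hp | hp
  · refine (moment_bound_ge P S hS C hC K hK hexp p hp).trans ?_
    gcongr; linarith
  · have h1 := moment_bound_ge P S hS C hC K hK hexp 1 le_rfl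
    simp only [Real.rpow_one, one_mul] at h1
    set A := 2 * Real.exp (1/2) * Real.sqrt K with hA
    have hA0 : 0 < A := by have := Real.sqrt_pos.2 hK; positivity
    have hi : Integrable (fun ω => |S ω|) P := by
      refine Integrable.of_bound (by fun_prop) C (Filter.Eventually.of_forall ?_)
      intro ω; simpa using hC ω
    have hpt : ∀ ω, |S ω| ^ p ≤ A ^ p * (1 + p * (|S ω| / A - 1)) := by
      intro ω
      have := rpow_one_add_le_one_add_mul_self (s := |S ω| / A - 1)
        (by have : 0 ≤ |S ω| / A := by positivity
            linarith) hp0.le hp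
      calc |S ω| ^ p = A ^ p * (1 + (|S ω| / A - 1)) ^ p := by
            rw [← Real.mul_rpow hA0.le (by
              have : 0 ≤ |S ω| / A := by positivity
              linarith)]
            congr 1; field_simp; ring
        _ ≤ _ := by gcongr
    calc ∫ ω, |S ω| ^ p ∂P ≤ ∫ ω, A ^ p * (1 + p * (|S ω| / A - 1)) ∂P := by
          apply integral_mono_of_nonneg (Filter.Eventually.of_forall fun ω => by positivity)
            ?_ (Filter.Eventually.of_forall hpt)
          exact ((integrable_const _).add
            (((hi.div_const _).sub (integrable_const _)).const_mul _)).const_mul _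
      _ = A ^ p * (1 + p * ((∫ ω, |S ω| ∂P) / A - 1)) := by
          have hi2 : Integrable (fun ω => p * (|S ω| / A - 1)) P :=
            ((hi.div_const _).sub (integrable_const _)).const_mul _
          rw [integral_const_mul, integral_add (integrable_const _) hi2, integral_const_mul,
            integral_sub (hi.div_const _) (integrable_const _), integral_div]
          simp
      _ ≤ A ^ p * (1 + p * 0) := by
          gcongr
          have : (∫ ω, |S ω| ∂P) / A ≤ 1 := (div_le_one hA0).2 h1
          linarith
      _ = A ^ p := by ring
      _ ≤ _ := by
          rw [hA]
          gcongr
          nlinarith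

lemma vol_eq {M : Type*} [MetricSpace M] [CompactSpace M]
    [MeasurableSpace M] [BorelSpace M] (μ : Measure M) [IsProbabilityMeasure μ]
    (hdiam : Metric.diam (Set.univ : Set M) = 1) (c₂ : ℝ)
    (hB : ∀ y : M, ∀ r₁ r₂ : ℝ, |vol μ y r₁ - vol μ y r₂| ≤ c₂ * |r₁ - r₂|)
    (y : M) (r : ℝ) : vol μ y r = μ.real (ball y r) := by
  unfold vol
  split_ifs with h
  · apply le_antisymm ?_ measureReal_le_one
    have h1 : ∀ n : ℕ, 1 - c₂ * (1 / ((n : ℝ) + 1)) ≤ μ.real (ball y r) := by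
      intro n
      have hpos : (0 : ℝ) < 1 / ((n : ℝ) + 1) := by positivity
      have := hB y 1 (1 - 1 / ((n : ℝ) + 1))
      have e1 : vol μ y 1 = 1 := by simp [vol]
      have e2 : vol μ y (1 - 1 / ((n : ℝ) + 1)) = μ.real (ball y (1 - 1 / ((n : ℝ) + 1))) := by
        unfold vol
        rw [if_neg (by linarith)]; rfl
      rw [e1, e2, sub_sub_cancel, abs_of_pos hpos] at this
      have h3 := (abs_le.1 this).2
      have h4 : μ.real (ball y (1 - 1 / ((n : ℝ) + 1))) ≤ μ.real (ball y r) :=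
        measureReal_mono (ball_subset_ball (by linarith))
      linarith
    have h2 := tendsto_one_div_add_atTop_nhds_zero_nat (𝕜 := ℝ)
    have h3 := (h2.const_mul c₂).const_sub 1
    simp only [mul_zero, sub_zero] at h3
    exact le_of_tendsto h3 (Filter.Eventually.of_forall h1)
  · rfl

lemma crossing {M : Type*} [MetricSpace M] [CompactSpace M]
    [MeasurableSpace M] [BorelSpace M] (μ : Measure M) [IsProbabilityMeasure μ]
    (c₂ : ℝ)
    (hB : ∀ y : M, ∀ r₁ r₂ : ℝ, |μ.real (ball y r₁) - μ.real (ball y r₂)| ≤ c₂ * |r₁ - r₂|)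
    (N : ℕ) (hN : 1 ≤ N) (P : Fin N → Set M) (hPm : ∀ j, MeasurableSet (P j))
    (hPd : Pairwise (Function.onFun Disjoint P)) (hPμ : ∀ j, μ (P j) = 1 / N)
    (δ : ℝ) (hδ : 0 ≤ δ) (hPδ : ∀ j, Metric.diam (P j) ≤ δ) (y : M) (r : ℝ)
    (T : Finset (Fin N)) (hT : ∀ j ∈ T, (∃ x ∈ P j, x ∈ ball y r) ∧ ∃ x ∈ P j, x ∉ ball y r) :
    (T.card : ℝ) ≤ N * (2 * c₂ * δ) := by
  have hdist : ∀ j, ∀ x ∈ P j, ∀ z ∈ P j, dist x z ≤ δ := fun j x hx z hz =>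
    (dist_le_diam_of_mem ((isCompact_univ (X := M)).isBounded.subset (subset_univ _)) hx hz).trans (hPδ j)
  have hsub : (⋃ j ∈ T, P j) ⊆ ball y (r + δ) \ ball y (r - δ) := by
    intro z hz
    simp only [mem_iUnion] at hz
    obtain ⟨j, hj, hz⟩ := hz
    obtain ⟨⟨x, hx, hxb⟩, ⟨x', hx', hxb'⟩⟩ := hT j hj
    simp only [mem_ball, not_lt, mem_sdiff] at *
    have h1 := hdist j z hz x hx
    have h2 := hdist j x' hx' z hz
    have h3 := dist_triangle z x y
    have h4 := dist_triangle x' z y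
    constructor <;> linarith
  have h1 : μ.real (⋃ j ∈ T, P j) = T.card * (1 / N) := by
    rw [measureReal_biUnion_finset (fun i _ j _ hij => hPd hij) (fun j _ => hPm j)]
    have : ∀ j, μ.real (P j) = 1 / N := fun j => by simp [measureReal_def, hPμ]
    simp [this]
  have h2 : μ.real (ball y (r + δ) \ ball y (r - δ)) ≤ 2 * c₂ * δ := by
    rw [measureReal_sdiff (ball_subset_ball (by linarith)) measurableSet_ball]
    have := hB y (r + δ) (r - δ)
    rw [show r + δ - (r - δ) = 2 * δ by ring, abs_of_nonneg (by linarith : 0 ≤ 2 * δ)] at this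
    have := (abs_le.1 this).2
    linarith
  have h3 := (measureReal_mono (μ := μ) hsub).trans h2
  rw [h1] at h3
  have hN0 : (0 : ℝ) < N := by exact_mod_cast hN
  calc (T.card : ℝ) = N * (T.card * (1 / N)) := by field_simp
    _ ≤ _ := by gcongr

lemma sum_ind_bounds {M : Type*} [MeasurableSpace M] (μ : Measure M) [IsProbabilityMeasure μ]
    (N : ℕ) (B : Set M) (ω : Fin N → M) :
    |(∑ i, B.indicator (1 : M → ℝ) (ω i)) - N * μ.real B| ≤ N := by
  have h1 : ∀ i, 0 ≤ B.indicator (1 : M → ℝ) (ω i) ∧ B.indicator (1 : M → ℝ) (ω i) ≤ 1 := by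
    intro i; by_cases hx : ω i ∈ B <;> simp [hx]
  have h2 : 0 ≤ ∑ i, B.indicator (1 : M → ℝ) (ω i) := Finset.sum_nonneg fun i _ => (h1 i).1
  have h3 : ∑ i, B.indicator (1 : M → ℝ) (ω i) ≤ N := by
    calc _ ≤ ∑ i : Fin N, (1 : ℝ) := Finset.sum_le_sum fun i _ => (h1 i).2
      _ = N := by simp
  have h4 : μ.real B ≤ 1 := measureReal_le_one
  have h5 : 0 ≤ μ.real B := measureReal_nonneg
  have hN0 : (0 : ℝ) ≤ N := by positivity
  rw [abs_le]
  constructor <;> nlinarith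

lemma exists_good {M : Type*} [MetricSpace M] [CompactSpace M]
    [MeasurableSpace M] [BorelSpace M] (μ : Measure M) [IsProbabilityMeasure μ]
    (c₂ : ℝ) (hc₂ : 0 < c₂)
    (hB : ∀ y : M, ∀ r₁ r₂ : ℝ, |μ.real (ball y r₁) - μ.real (ball y r₂)| ≤ c₂ * |r₁ - r₂|)
    (N : ℕ) (hN : 1 ≤ N) (P : Fin N → Set M) (hPm : ∀ j, MeasurableSet (P j))
    (hPd : Pairwise (Function.onFun Disjoint P)) (hPU : (⋃ j, P j) = Set.univ)
    (hPμ : ∀ j, μ (P j) = 1 / N)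
    (δ : ℝ) (hδ : 0 < δ) (hPδ : ∀ j, Metric.diam (P j) ≤ δ)
    (p : ℝ) (hp : 0 < p) (ξ : Measure ℝ) [IsProbabilityMeasure ξ] :
    ∃ D : Fin N → M,
      (∫ y, (∫ r, |(∑ i : Fin N, (Metric.ball y r).indicator 1 (D i) : ℝ)
            - N * μ.real (ball y r)| ^ p ∂ξ) ∂μ) ≤
        (2 * Real.exp (1/2) * Real.sqrt ((p + 1) * (N * (2 * c₂ * δ)))) ^ p := by
  have hN0 : (0 : ℝ) < N := by exact_mod_cast hN
  have hK : 0 < N * (2 * c₂ * δ) := by positivity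
  have hPne : ∀ j, μ (P j) ≠ 0 := fun j => by rw [hPμ]; simp
  have hPr : ∀ j, μ.real (P j) = 1 / N := fun j => by simp [measureReal_def, hPμ]
  let ν : Fin N → Measure M := fun j => ProbabilityTheory.cond μ (P j)
  have : ∀ j, IsProbabilityMeasure (ν j) := fun j =>
    ProbabilityTheory.cond_isProbabilityMeasure (hPne j)
  have hνr : ∀ j B, (ν j).real B = N * μ.real (P j ∩ B) := by
    intro j B
    show (ProbabilityTheory.cond μ (P j)).real B = _
    rw [measureReal_def, ProbabilityTheory.cond_apply (hPm j), ENNReal.toReal_mul, hPμ,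
      measureReal_def]
    simp
  have hsum : ∀ B, MeasurableSet B → ∑ j, (ν j).real B = N * μ.real B := by
    intro B hBm
    simp_rw [hνr]
    rw [← Finset.mul_sum]
    congr 1
    have : B = ⋃ j ∈ (Finset.univ : Finset (Fin N)), (P j ∩ B) := by
      simp [← iUnion_inter, hPU]
    conv_rhs => rw [this]
    rw [measureReal_biUnion_finset]
    · intro i _ j _ hij
      exact (hPd hij).mono inter_subset_left inter_subset_left
    · exact fun j _ => (hPm j).inter hBm
  let F : (Fin N → M) → M × ℝ → ℝ := fun ω z =>
    |(∑ i : Fin N, (Metric.ball z.1 z.2).indicator 1 (ω i) : ℝ) - N * μ.real (ball z.1 z.2)| ^ p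
  have hvm : Measurable (fun z : M × ℝ => μ.real (ball z.1 z.2)) := by
    have hs : MeasurableSet {q : (M × ℝ) × M | dist q.2 q.1.1 < q.1.2} :=
      measurableSet_lt (by fun_prop) (by fun_prop)
    exact (measurable_measure_prodMk_left (ν := μ) hs).ennreal_toReal
  have him : ∀ i : Fin N, Measurable (fun q : (Fin N → M) × (M × ℝ) =>
      (Metric.ball q.2.1 q.2.2).indicator (1 : M → ℝ) (q.1 i)) := by
    intro i
    have hs : MeasurableSet {q : (Fin N → M) × (M × ℝ) | dist (q.1 i) q.2.1 < q.2.2} :=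
      measurableSet_lt (by fun_prop) (by fun_prop)
    have h1 : Measurable (({q : (Fin N → M) × (M × ℝ) | dist (q.1 i) q.2.1 < q.2.2}).indicator
      (1 : (Fin N → M) × (M × ℝ) → ℝ)) := measurable_one.indicator hs
    exact h1
  have hFm : Measurable (Function.uncurry F) := by
    have h1 : Measurable (fun q : (Fin N → M) × (M × ℝ) =>
      (∑ i : Fin N, (Metric.ball q.2.1 q.2.2).indicator 1 (q.1 i) : ℝ)
        - N * μ.real (ball q.2.1 q.2.2)) :=
      (Finset.measurable_sum _ fun i _ => him i).sub ((hvm.comp measurable_snd).const_mul _)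
    have h2 := (continuous_abs.measurable.comp h1).pow_const p
    exact h2
  have hFb : ∀ ω z, ‖F ω z‖ ≤ (N : ℝ) ^ p := by
    intro ω z
    rw [Real.norm_eq_abs, abs_of_nonneg (by positivity)]
    exact Real.rpow_le_rpow (abs_nonneg _) (sum_ind_bounds μ N _ ω) hp.le
  have hFi : Integrable (Function.uncurry F) ((Measure.pi ν).prod (μ.prod ξ)) :=
    Integrable.of_bound hFm.aestronglyMeasurable ((N : ℝ) ^ p)
      (Filter.Eventually.of_forall fun q => hFb q.1 q.2)
  obtain ⟨D, hD⟩ := exists_le_integral hFi.integral_prod_left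
  refine ⟨D, ?_⟩
  have e1 : (∫ y, (∫ r, |(∑ i : Fin N, (Metric.ball y r).indicator 1 (D i) : ℝ)
            - N * μ.real (ball y r)| ^ p ∂ξ) ∂μ) = ∫ z, F D z ∂(μ.prod ξ) := by
    rw [integral_prod]
    exact Integrable.of_bound (hFm.comp measurable_prodMk_left).aestronglyMeasurable ((N : ℝ) ^ p)
      (Filter.Eventually.of_forall fun q => hFb D q)
  rw [e1]
  refine hD.trans ?_
  simp only [Function.uncurry]
  rw [integral_integral_swap hFi]
  have key : ∀ z : M × ℝ, ∫ ω, F ω z ∂(Measure.pi ν) ≤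
      (2 * Real.exp (1/2) * Real.sqrt ((p + 1) * (N * (2 * c₂ * δ)))) ^ p := by
    rintro ⟨y, r⟩
    have hS : ∀ ω : Fin N → M, (∑ i : Fin N, (Metric.ball y r).indicator 1 (ω i) : ℝ)
        - N * μ.real (ball y r)
        = ∑ i, ((ball y r).indicator (1 : M → ℝ) (ω i) - (ν i).real (ball y r)) := by
      intro ω
      rw [Finset.sum_sub_distrib, hsum _ measurableSet_ball]
    refine moment_bound (Measure.pi ν) (fun ω => (∑ i : Fin N, (Metric.ball y r).indicator 1 (ω i) : ℝ)
        - N * μ.real (ball y r)) ?_ N (fun ω => sum_ind_bounds μ N _ ω) _ hK ?_ p hp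
    · refine (Finset.measurable_sum _ fun i _ => ?_).sub measurable_const
      exact (measurable_one.indicator measurableSet_ball).comp (measurable_pi_apply i)
    · intro t
      simp_rw [hS]
      classical
      refine exp_moment ν (ball y r) measurableSet_ball (Finset.univ.filter fun j =>
        (∃ x ∈ P j, x ∈ ball y r) ∧ ∃ x ∈ P j, x ∉ ball y r) ?_ _ ?_ t
      · intro i hi
        have hmem : ∀ᵐ x ∂(ν i), x ∈ P i := ProbabilityTheory.ae_cond_mem (hPm i)
        simp only [Finset.mem_filter, Finset.mem_univ, true_and, not_and_or] at hi
        rcases hi with hi | hi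
        · push Not at hi
          have : P i ∩ ball y r = ∅ := by
            ext x; simp only [mem_inter_iff, mem_empty_iff_false, iff_false]
            exact fun h => hi x h.1 h.2
          filter_upwards [hmem] with x hx
          rw [hνr, this, indicator_of_notMem (hi x hx)]; simp
        · push Not at hi
          have : P i ∩ ball y r = P i := inter_eq_left.2 hi
          filter_upwards [hmem] with x hx
          rw [hνr, this, indicator_of_mem (hi x hx), hPr]
          simp only [Pi.one_apply]
          field_simp
      · apply crossing μ c₂ hB N hN P hPm hPd hPμ δ hδ.le hPδ y r
        intro j hj
        simpa using hj
  refine (integral_mono_of_nonneg (Filter.Eventually.of_forall fun z => integral_nonneg fun ω => ?_)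
    (integrable_const _) (Filter.Eventually.of_forall key)).trans ?_
  · simp only [F]; positivity
  · simp

/-- Theorem 1.1: in a compact connected metric measure space satisfying
Conditions A and B and admitting good equal-measure partitions, for every `N`, every
`0 < p < ∞`, and every Borel probability measure `ξ` on `[0,1]`, there exists an
`N`-point set whose `L_p`-discrepancy is at most `c₃ (p+1)^{1/2} N^{1/2 - 1/(2d)}`. -/
theorem stmt9 {M : Type*} [MetricSpace M] [CompactSpace M] [ConnectedSpace M] [Nonempty M]
    [MeasurableSpace M] [BorelSpace M] (μ : Measure M) [IsProbabilityMeasure μ]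
    (hdiam : Metric.diam (Set.univ : Set M) = 1)
    (d c₁ c₂ c₈ : ℝ) (hd : 0 < d) (hc₁ : 0 < c₁) (hc₂ : 0 < c₂) (hc₈ : 0 < c₈)
    (hA : ∀ y : M, ∀ r ∈ Set.Icc (0:ℝ) 1,
      c₁⁻¹ * r ^ d ≤ vol μ y r ∧ vol μ y r ≤ c₁ * r ^ d)
    (hB : ∀ y : M, ∀ r₁ r₂ : ℝ, |vol μ y r₁ - vol μ y r₂| ≤ c₂ * |r₁ - r₂|)
    (hpart : ∃ m₀ : ℕ, ∀ m : ℕ, m₀ ≤ m → ∃ P : Fin m → Set M,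
      (∀ j, MeasurableSet (P j)) ∧ Pairwise (Function.onFun Disjoint P) ∧
      (⋃ j, P j) = Set.univ ∧ (∀ j, μ (P j) = 1 / m) ∧
      (∀ j, Metric.diam (P j) ≤ c₈ * (m : ℝ) ^ (-(1:ℝ)/d))) :
    ∃ c₃ : ℝ, 0 < c₃ ∧ ∀ N : ℕ, 1 ≤ N → ∀ p : ℝ, 0 < p →
      ∀ ξ : Measure ℝ, IsProbabilityMeasure ξ → ξ (Set.Icc (0:ℝ) 1)ᶜ = 0 →
      ∃ D : Fin N → M,
        (∫ y, (∫ r, |(∑ i : Fin N, (Metric.ball y r).indicator 1 (D i) : ℝ)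
            - N * vol μ y r| ^ p ∂ξ) ∂μ) ^ (1/p)
          ≤ c₃ * (p + 1) ^ ((1:ℝ)/2) * (N : ℝ) ^ (1/2 - 1/(2*d)) := by
  obtain ⟨m₀, hm₀⟩ := hpart
  have hv : ∀ y r, vol μ y r = μ.real (ball y r) := vol_eq μ hdiam c₂ hB
  simp_rw [hv] at hB ⊢
  have hK : 0 < 2 * c₂ * c₈ := by positivity
  refine ⟨2 * Real.exp (1/2) * Real.sqrt (2 * c₂ * c₈) + (m₀ : ℝ) * (m₀ : ℝ) ^ (1 / (2 * d)),
    by positivity, ?_⟩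
  intro N hN p hp ξ hξ _
  have hN0 : (0 : ℝ) < N := by exact_mod_cast hN
  have hN1 : (1 : ℝ) ≤ N := by exact_mod_cast hN
  rcases le_or_gt m₀ N with h | h
  · obtain ⟨P, hPm, hPd, hPU, hPμ, hPδ⟩ := hm₀ N h
    obtain ⟨D, hD⟩ := exists_good μ c₂ hc₂ hB N hN P hPm hPd hPU hPμ
      (c₈ * (N : ℝ) ^ (-(1:ℝ)/d)) (by positivity) hPδ p hp ξ
    refine ⟨D, ?_⟩
    have hnn : 0 ≤ ∫ y, (∫ r, |(∑ i : Fin N, (Metric.ball y r).indicator 1 (D i) : ℝ)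
            - N * μ.real (ball y r)| ^ p ∂ξ) ∂μ :=
      integral_nonneg fun y => integral_nonneg fun r => by positivity
    refine (Real.rpow_le_rpow hnn hD (by positivity)).trans ?_
    rw [← Real.rpow_mul (by positivity), mul_one_div_cancel hp.ne', Real.rpow_one]
    have e : Real.sqrt ((p + 1) * (N * (2 * c₂ * (c₈ * (N : ℝ) ^ (-(1:ℝ)/d)))))
        = Real.sqrt (2 * c₂ * c₈) * (p + 1) ^ ((1:ℝ)/2) * (N : ℝ) ^ (1/2 - 1/(2*d)) := by
      have e1 : (N : ℝ) ^ (1/2 - 1/(2*d)) = Real.sqrt (N * (N : ℝ) ^ (-(1:ℝ)/d)) := by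
        rw [Real.sqrt_eq_rpow]
        nth_rewrite 2 [← Real.rpow_one (N : ℝ)]
        rw [← Real.rpow_add hN0, ← Real.rpow_mul hN0.le]
        congr 1
        field_simp
        ring
      rw [e1, ← Real.sqrt_eq_rpow, ← Real.sqrt_mul hK.le, ← Real.sqrt_mul (by positivity)]
      congr 1; ring
    rw [e]
    have : 0 ≤ (m₀ : ℝ) * (m₀ : ℝ) ^ (1 / (2 * d)) := by positivity
    calc _ = (2 * Real.exp (1/2) * Real.sqrt (2 * c₂ * c₈)) * (p + 1) ^ ((1:ℝ)/2)
          * (N : ℝ) ^ (1/2 - 1/(2*d)) := by ring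
      _ ≤ _ := by gcongr; linarith
  · have y₀ : M := Classical.arbitrary M
    refine ⟨fun _ => y₀, ?_⟩
    set D : Fin N → M := fun _ => y₀
    have hnn : 0 ≤ ∫ y, (∫ r, |(∑ i : Fin N, (Metric.ball y r).indicator 1 (D i) : ℝ)
            - N * μ.real (ball y r)| ^ p ∂ξ) ∂μ :=
      integral_nonneg fun y => integral_nonneg fun r => by positivity
    have hb : ∀ y : M, ‖∫ r, |(∑ i : Fin N, (Metric.ball y r).indicator 1 (D i) : ℝ)
            - N * μ.real (ball y r)| ^ p ∂ξ‖ ≤ (N : ℝ) ^ p := by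
      intro y
      refine (norm_integral_le_of_norm_le_const (C := (N : ℝ) ^ p)
        (Filter.Eventually.of_forall fun r => ?_)).trans (by simp)
      rw [Real.norm_eq_abs, abs_of_nonneg (by positivity)]
      exact Real.rpow_le_rpow (abs_nonneg _) (sum_ind_bounds μ N _ D) hp.le
    have hle : ∫ y, (∫ r, |(∑ i : Fin N, (Metric.ball y r).indicator 1 (D i) : ℝ)
            - N * μ.real (ball y r)| ^ p ∂ξ) ∂μ ≤ (N : ℝ) ^ p := by
      refine (le_abs_self _).trans ?_
      rw [← Real.norm_eq_abs]
      exact (norm_integral_le_of_norm_le_const (C := (N : ℝ) ^ p)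
        (Filter.Eventually.of_forall hb)).trans (by simp)
    refine (Real.rpow_le_rpow hnn hle (by positivity)).trans ?_
    rw [← Real.rpow_mul (by positivity), mul_one_div_cancel hp.ne', Real.rpow_one]
    have hNm : (N : ℝ) ≤ m₀ := by exact_mod_cast h.le
    have h1 : (1 : ℝ) ≤ (p + 1) ^ ((1:ℝ)/2) := Real.one_le_rpow (by linarith) (by norm_num)
    calc (N : ℝ) = N * (N : ℝ) ^ (1 / (2 * d)) * 1 * (N : ℝ) ^ (-(1 / (2 * d))) := by
          rw [mul_one, mul_assoc, ← Real.rpow_add hN0]; simp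
      _ ≤ (2 * Real.exp (1/2) * Real.sqrt (2 * c₂ * c₈) + (m₀ : ℝ) * (m₀ : ℝ) ^ (1 / (2 * d)))
          * (p + 1) ^ ((1:ℝ)/2) * (N : ℝ) ^ (1/2 - 1/(2*d)) := by
          gcongr
          · have h2 : N * (N : ℝ) ^ (1 / (2 * d)) ≤ (m₀ : ℝ) * (m₀ : ℝ) ^ (1 / (2 * d)) := by
              gcongr
            have : 0 ≤ 2 * Real.exp (1/2) * Real.sqrt (2 * c₂ * c₈) := by positivity
            linarith
          · linarith
end

section
/- (Corollary 1.1) Under the assumptions of Theorem 1.1, there exists c₆ > 0 such that for all N ≥ 2 there exists an N-point set D_N ⊂ M with L_∞[D_N] = sup_{y ∈ M, r ∈ [0,1]} |#(B(y,r) ∩ D_N) − N μ(B(y,r))| ≤ c₆ N^{1/2 − 1/(2d)} (log N)^{1/2}. -/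
open MeasureTheory Metric Set

open ProbabilityTheory in
lemma hoeff_aux {M : Type*} [MeasurableSpace M] {N : ℕ} (ν : Fin N → Measure M)
    [∀ j, IsProbabilityMeasure (ν j)] (B : Set M) (hB : MeasurableSet B) (J : Finset (Fin N))
    (K t : ℝ) (hJ : (J.card : ℝ) ≤ K) (ht : 0 < t) :
    (Measure.pi ν).real {ω | t ≤ |∑ j ∈ J, (B.indicator 1 (ω j) - (ν j).real B : ℝ)|}
      ≤ 2 * Real.exp (-2 * t ^ 2 / K) := by
  rcases J.eq_empty_or_nonempty with rfl | hne
  · have : {ω : Fin N → M | t ≤ |∑ j ∈ (∅ : Finset (Fin N)), (B.indicator 1 (ω j) - (ν j).real B : ℝ)|} = ∅ := by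
      ext ω; simp [ht]
    rw [this]; simp; positivity
  have hcard : (0 : ℝ) < J.card := by exact_mod_cast hne.card_pos
  have hmeas : Measurable (B.indicator (1 : M → ℝ)) := measurable_one.indicator hB
  have hX : ∀ j, HasSubgaussianMGF (fun ω : Fin N → M => B.indicator 1 (ω j) - (ν j).real B)
      ((‖(1:ℝ) - 0‖₊ / 2) ^ 2) (Measure.pi ν) := by
    intro j
    have h1 := hasSubgaussianMGF_of_mem_Icc (μ := Measure.pi ν)
      (X := fun ω : Fin N → M => B.indicator (1 : M → ℝ) (ω j)) (a := 0) (b := 1)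
      (hmeas.comp (measurable_pi_apply j)).aemeasurable
      (Filter.Eventually.of_forall fun ω => by
        by_cases h : ω j ∈ B <;> simp [h])
    have h2 : ∫ ω, B.indicator (1 : M → ℝ) (ω j) ∂(Measure.pi ν) = (ν j).real B := by
      have := (measurePreserving_eval ν j)
      rw [← integral_indicator_one hB, ← this.map_eq, integral_map this.measurable.aemeasurable
        (hmeas.aestronglyMeasurable)]
    rw [h2] at h1
    exact h1
  have hind : iIndepFun (fun j (ω : Fin N → M) => B.indicator (1 : M → ℝ) (ω j) - (ν j).real B)
      (Measure.pi ν) :=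
    iIndepFun_pi (X := fun j x => B.indicator (1 : M → ℝ) x - (ν j).real B)
      (fun j => (hmeas.sub_const _).aemeasurable)
  have hind' : iIndepFun (fun j (ω : Fin N → M) => -(B.indicator (1 : M → ℝ) (ω j) - (ν j).real B))
      (Measure.pi ν) :=
    iIndepFun_pi (X := fun j x => -(B.indicator (1 : M → ℝ) x - (ν j).real B))
      (fun j => (hmeas.sub_const _).neg.aemeasurable)
  have h1 := HasSubgaussianMGF.measure_sum_ge_le_of_iIndepFun hind (s := J) (fun i _ => hX i) ht.le
  have h2 := HasSubgaussianMGF.measure_sum_ge_le_of_iIndepFun hind' (s := J)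
    (fun i _ => (hX i).neg) ht.le
  have hle : Real.exp (-t ^ 2 / (2 * ((∑ i ∈ J, (‖(1:ℝ) - 0‖₊ / 2) ^ 2 : NNReal) : ℝ)))
      ≤ Real.exp (-2 * t ^ 2 / K) := by
    apply Real.exp_le_exp.mpr
    have : (2 * ((∑ i ∈ J, (‖(1:ℝ) - 0‖₊ / 2) ^ 2 : NNReal) : ℝ)) = J.card / 2 := by
      simp; ring
    rw [this]
    have : -t ^ 2 / ((J.card : ℝ) / 2) = -(2 * t ^ 2 / J.card) := by field_simp
    rw [this, neg_mul, neg_div]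
    apply neg_le_neg
    gcongr
  have hsub : {ω : Fin N → M | t ≤ |∑ j ∈ J, (B.indicator 1 (ω j) - (ν j).real B : ℝ)|} ⊆
      {ω | t ≤ ∑ j ∈ J, (B.indicator 1 (ω j) - (ν j).real B : ℝ)} ∪
      {ω | t ≤ ∑ j ∈ J, -(B.indicator 1 (ω j) - (ν j).real B : ℝ)} := by
    intro ω hω
    simp only [mem_ofPred_eq, mem_union, Finset.sum_neg_distrib] at hω ⊢
    exact le_abs.mp hω
  calc _ ≤ _ := measureReal_mono hsub
    _ ≤ _ := measureReal_union_le _ _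
    _ ≤ _ := by rw [two_mul]; exact add_le_add (h1.trans hle) (h2.trans hle)

open ProbabilityTheory in
open Classical in
lemma disc_exists {M : Type*} [MeasurableSpace M] (μ : Measure M) [IsProbabilityMeasure μ]
    {N : ℕ} (hN : 0 < N) (P : Fin N → Set M) (hP : ∀ j, MeasurableSet (P j))
    (hdis : Pairwise (Function.onFun Disjoint P)) (hU : (⋃ j, P j) = Set.univ)
    (hμ : ∀ j, μ (P j) = 1 / N) {G : Type*} [Fintype G] (B : G → Set M)
    (hB : ∀ g, MeasurableSet (B g)) (K t : ℝ) (ht : 0 < t)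
    (hK : ∀ g, ((Finset.univ.filter
      (fun j => (P j ∩ B g).Nonempty ∧ ¬ P j ⊆ B g)).card : ℝ) ≤ K)
    (hlt : Fintype.card G * (2 * Real.exp (-2 * t ^ 2 / K)) < 1) :
    ∃ D : Fin N → M, ∀ g,
      |(∑ i : Fin N, (B g).indicator 1 (D i) : ℝ) - N * μ.real (B g)| ≤ t := by
  have hNe : (N : ENNReal) ≠ 0 := by exact_mod_cast hN.ne'
  have hne : ∀ j, μ (P j) ≠ 0 := by
    intro j; rw [hμ]; simp
  have hprob : ∀ j, IsProbabilityMeasure (μ[|P j]) := fun j => cond_isProbabilityMeasure (hne j)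
  let ν : Fin N → Measure M := fun j => μ[|P j]
  have hν : ∀ j, IsProbabilityMeasure (ν j) := hprob
  have hνB : ∀ j (S : Set M), (ν j).real S = N * μ.real (P j ∩ S) := by
    intro j S
    simp only [ν, Measure.real, cond_apply (hP j), hμ, ENNReal.toReal_mul]
    simp
  let J : G → Finset (Fin N) := fun g => Finset.univ.filter
      (fun j => (P j ∩ B g).Nonempty ∧ ¬ P j ⊆ B g)
  let bad : G → Set (Fin N → M) := fun g =>
    {ω | t ≤ |∑ j ∈ J g, ((B g).indicator 1 (ω j) - (ν j).real (B g) : ℝ)|}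
  have hbad : (Measure.pi ν).real (⋃ g, bad g) < 1 := by
    refine (measureReal_iUnion_fintype_le _).trans_lt ?_
    refine (Finset.sum_le_sum (fun g _ => hoeff_aux ν (B g) (hB g) (J g) K t (hK g) ht)).trans_lt ?_
    simpa using hlt
  have hae : ∀ᵐ ω ∂(Measure.pi ν), ∀ j, ω j ∈ P j := by
    rw [ae_all_iff]
    intro j
    have h1 := ae_cond_mem (μ := μ) (hP j)
    exact (measurePreserving_eval ν j).quasiMeasurePreserving.ae h1
  have hex : ∃ ω : Fin N → M, (∀ j, ω j ∈ P j) ∧ ω ∉ ⋃ g, bad g := by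
    by_contra hcon
    push Not at hcon
    have : ∀ᵐ ω ∂(Measure.pi ν), ω ∈ ⋃ g, bad g := hae.mono hcon
    have h1 : (Measure.pi ν) (⋃ g, bad g) = 1 := by
      have h := measure_congr (μ := Measure.pi ν) (s := ⋃ g, bad g) (t := univ)
        (Filter.eventuallyEq_univ.mpr this)
      rw [h, measure_univ]
    simp [Measure.real, h1] at hbad
  obtain ⟨ω, hω, hωb⟩ := hex
  refine ⟨ω, fun g => ?_⟩
  have hg : |∑ j ∈ J g, ((B g).indicator 1 (ω j) - (ν j).real (B g) : ℝ)| < t := by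
    by_contra hcon
    exact hωb (mem_iUnion.mpr ⟨g, not_lt.mp hcon⟩)
  have hzero : ∀ j, j ∉ J g → ((B g).indicator 1 (ω j) - (ν j).real (B g) : ℝ) = 0 := by
    intro j hj
    simp only [J, Finset.mem_filter, Finset.mem_univ, true_and, not_and, not_not] at hj
    by_cases h : (P j ∩ B g).Nonempty
    · have hs := hj h
      have : P j ∩ B g = P j := inter_eq_left.mpr hs
      rw [hνB, this, indicator_of_mem (hs (hω j))]
      have hN' : (N : ℝ) ≠ 0 := by exact_mod_cast hN.ne'
      simp [Measure.real, hμ, hN']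
    · have h0 := not_nonempty_iff_eq_empty.mp h
      have : ω j ∉ B g := fun hh => h ⟨ω j, hω j, hh⟩
      rw [hνB, h0, indicator_of_notMem this]
      simp
  have hsum : ∑ j, (ν j).real (B g) = N * μ.real (B g) := by
    simp only [hνB]
    rw [← Finset.mul_sum]
    congr 1
    have : B g = ⋃ j, (P j ∩ B g) := by rw [← iUnion_inter, hU, univ_inter]
    conv_rhs => rw [this]
    rw [measureReal_iUnion_fintype]
    · intro i j hij
      exact (hdis hij).mono inter_subset_left inter_subset_left
    · intro j; exact (hP j).inter (hB g)
  have : (∑ i : Fin N, (B g).indicator 1 (ω i) : ℝ) - N * μ.real (B g) =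
      ∑ j ∈ J g, ((B g).indicator 1 (ω j) - (ν j).real (B g) : ℝ) := by
    rw [← hsum, ← Finset.sum_sub_distrib]
    symm
    apply Finset.sum_subset (Finset.subset_univ _)
    intro j _ hj
    exact hzero j hj
  rw [this]
  exact hg.le

lemma vol_le_one' {M : Type*} [MetricSpace M] [MeasurableSpace M] (μ : Measure M)
    [IsProbabilityMeasure μ] (y : M) (r : ℝ) : vol μ y r ≤ 1 := by
  unfold vol
  split_ifs
  · exact le_rfl
  · exact measureReal_le_one

lemma real_ball_le_vol {M : Type*} [MetricSpace M] [MeasurableSpace M] (μ : Measure M)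
    [IsProbabilityMeasure μ] (y : M) (r : ℝ) : μ.real (ball y r) ≤ vol μ y r := by
  unfold vol
  split_ifs
  · exact measureReal_le_one
  · exact le_rfl

lemma vol_mono' {M : Type*} [MetricSpace M] [MeasurableSpace M] (μ : Measure M)
    [IsProbabilityMeasure μ] (y z : M) (r s : ℝ) (h : r + dist y z ≤ s) :
    vol μ y r ≤ vol μ z s := by
  by_cases hs : 1 ≤ s
  · have : vol μ z s = 1 := by simp [vol, hs]
    rw [this]; exact vol_le_one' μ y r
  · have hr : ¬ 1 ≤ r := by
      have := dist_nonneg (x := y) (y := z); linarith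
    simp only [vol, hs, hr, if_false]
    exact measureReal_mono (ball_subset_ball' h)

lemma vol_zero' {M : Type*} [MetricSpace M] [MeasurableSpace M] (μ : Measure M) (z : M) :
    vol μ z 0 = 0 := by
  simp [vol]

lemma one_le_d {M : Type*} [MetricSpace M] [MeasurableSpace M] (μ : Measure M) (y : M)
    (d c₁ c₂ : ℝ) (hc₁ : 0 < c₁)
    (hA : ∀ r ∈ Set.Icc (0:ℝ) 1, c₁⁻¹ * r ^ d ≤ vol μ y r)
    (hB : ∀ r₁ r₂ : ℝ, |vol μ y r₁ - vol μ y r₂| ≤ c₂ * |r₁ - r₂|) : 1 ≤ d := by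
  by_contra hd
  push Not at hd
  have hbd : ∀ x : ℝ, 1 ≤ x → x ^ (1 - d) ≤ c₁ * c₂ := by
    intro x hx
    have hx0 : 0 < x := by linarith
    have h1 := hA x⁻¹ ⟨by positivity, inv_le_one_of_one_le₀ hx⟩
    have h2 := hB x⁻¹ 0
    rw [vol_zero', sub_zero, sub_zero, abs_of_pos (inv_pos.mpr hx0)] at h2
    have h3 := h1.trans ((le_abs_self _).trans h2)
    rw [Real.inv_rpow hx0.le] at h3
    rw [Real.rpow_sub hx0, Real.rpow_one]
    have hp : 0 < x ^ d := Real.rpow_pos_of_pos hx0 d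
    calc x / x ^ d = (c₁⁻¹ * (x ^ d)⁻¹) * (c₁ * x) := by field_simp
      _ ≤ (c₂ * x⁻¹) * (c₁ * x) := by gcongr
      _ = c₁ * c₂ := by field_simp
  have ht := tendsto_rpow_atTop (y := 1 - d) (by linarith)
  obtain ⟨x, hx1, hx2⟩ := ((ht.eventually_gt_atTop (c₁ * c₂)).and
    (Filter.eventually_ge_atTop 1)).exists
  exact absurd (hbd x hx2) (not_le.mpr hx1)

open Classical in
lemma card_cut {M : Type*} [MetricSpace M] [CompactSpace M] [MeasurableSpace M] [BorelSpace M]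
    (μ : Measure M) [IsProbabilityMeasure μ] (c₂ δ : ℝ) (hδ : 0 < δ)
    (hB : ∀ y : M, ∀ r₁ r₂ : ℝ, |vol μ y r₁ - vol μ y r₂| ≤ c₂ * |r₁ - r₂|)
    {N : ℕ} (hN : 0 < N) (P : Fin N → Set M) (hP : ∀ j, MeasurableSet (P j))
    (hdis : Pairwise (Function.onFun Disjoint P))
    (hμ : ∀ j, μ (P j) = 1 / N) (hdiam : ∀ j, Metric.diam (P j) ≤ δ)
    (z : M) (r : ℝ) (hr : r ≤ 1) :
    ((Finset.univ.filter
      (fun j => (P j ∩ ball z r).Nonempty ∧ ¬ P j ⊆ ball z r)).card : ℝ) ≤ N * (2 * c₂ * δ) := by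
  set J := Finset.univ.filter (fun j => (P j ∩ ball z r).Nonempty ∧ ¬ P j ⊆ ball z r) with hJ
  have hsub : (⋃ j ∈ J, P j) ⊆ ball z (r + δ) \ ball z (r - δ) := by
    intro x hx
    simp only [mem_iUnion] at hx
    obtain ⟨j, hj, hx⟩ := hx
    simp only [hJ, Finset.mem_filter, Finset.mem_univ, true_and] at hj
    obtain ⟨⟨a, haP, ha⟩, hn⟩ := hj
    obtain ⟨b, hbP, hb⟩ := not_subset.mp hn
    have hbdd : Bornology.IsBounded (P j) := isBounded_of_compactSpace
    have h1 : dist x a ≤ δ := (dist_le_diam_of_mem hbdd hx haP).trans (hdiam j)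
    have h2 : dist b x ≤ δ := (dist_le_diam_of_mem hbdd hbP hx).trans (hdiam j)
    simp only [mem_ball, not_lt, mem_sdiff] at ha hb ⊢
    have h3 := dist_triangle x a z
    have h4 := dist_triangle b x z
    constructor <;> linarith
  have h1 : μ.real (⋃ j ∈ J, P j) = J.card / N := by
    rw [measureReal_biUnion_finset (fun i _ j _ hij => hdis hij) (fun j _ => hP j)]
    simp [Measure.real, hμ]
    rfl
  have h2 := measureReal_mono (μ := μ) hsub
  rw [measureReal_sdiff (ball_subset_ball (by linarith)) measurableSet_ball, h1] at h2
  have h3 := real_ball_le_vol μ z (r + δ)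
  have h4 : vol μ z (r - δ) = μ.real (ball z (r - δ)) := by
    unfold vol
    rw [if_neg (by linarith)]
    rfl
  have h5 := (le_abs_self _).trans (hB z (r + δ) (r - δ))
  have h6 : |r + δ - (r - δ)| = 2 * δ := by rw [abs_of_pos] <;> linarith
  rw [h6] at h5
  have h7 : (J.card : ℝ) / N ≤ 2 * c₂ * δ := by linarith
  have hN' : (0:ℝ) < N := by exact_mod_cast hN
  rw [div_le_iff₀ hN'] at h7
  linarith

lemma count_mono {M : Type*} [MetricSpace M] {N : ℕ} (D : Fin N → M) {A B : Set M} (h : A ⊆ B) :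
    (∑ i : Fin N, A.indicator 1 (D i) : ℝ) ≤ ∑ i : Fin N, B.indicator 1 (D i) :=
  Finset.sum_le_sum fun i _ => indicator_le_indicator_of_subset h (fun _ => by simp) _

lemma count_nonneg {M : Type*} {N : ℕ} (D : Fin N → M) (A : Set M) :
    (0 : ℝ) ≤ ∑ i : Fin N, A.indicator 1 (D i) :=
  Finset.sum_nonneg fun i _ => indicator_nonneg (fun _ _ => by simp) _

lemma count_le {M : Type*} {N : ℕ} (D : Fin N → M) (A : Set M) :
    (∑ i : Fin N, A.indicator 1 (D i) : ℝ) ≤ N := by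
  calc (∑ i : Fin N, A.indicator 1 (D i) : ℝ) ≤ ∑ i : Fin N, (1:ℝ) :=
        Finset.sum_le_sum fun i _ => by by_cases h : D i ∈ A <;> simp [h]
    _ = N := by simp

lemma sandwich {M : Type*} [MetricSpace M] [MeasurableSpace M]
    (μ : Measure M) [IsProbabilityMeasure μ] (c₂ c₈ t : ℝ) (hc₂ : 0 < c₂) (hc₈ : 0 < c₈)
    (ht : 0 < t)
    (hB : ∀ y : M, ∀ r₁ r₂ : ℝ, |vol μ y r₁ - vol μ y r₂| ≤ c₂ * |r₁ - r₂|)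
    {N : ℕ} (hN : 0 < N) (D : Fin N → M) (y z : M) (hyz : dist y z ≤ c₈ / N)
    (hD : ∀ k : Fin N, |(∑ i : Fin N, (ball z ((k : ℝ) / N)).indicator 1 (D i) : ℝ)
      - N * μ.real (ball z ((k : ℝ) / N))| ≤ t) (r : ℝ) (hr : r ∈ Icc (0:ℝ) 1) :
    |(∑ i : Fin N, (ball y r).indicator 1 (D i) : ℝ) - N * vol μ y r|
      ≤ t + 2 * c₂ * (c₈ + 1) := by
  have hN' : (0:ℝ) < N := by exact_mod_cast hN
  have hD' : ∀ k : ℕ, k < N → |(∑ i : Fin N, (ball z ((k : ℝ) / N)).indicator 1 (D i) : ℝ)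
      - N * vol μ z ((k : ℝ) / N)| ≤ t := by
    intro k hk
    have h1 := hD ⟨k, hk⟩
    have : ¬ (1 ≤ (k : ℝ) / N) := by
      rw [not_le, div_lt_one hN']; exact_mod_cast hk
    simp only [vol, this, if_false]
    exact h1
  set e : ℝ := (c₈ + 1) / N with he
  have he0 : 0 < e := by positivity
  have hNe : N * e = c₈ + 1 := by rw [he]; field_simp
  have hee : e = c₈ / N + 1 / N := by rw [he]; ring
  have hiN : (0:ℝ) < 1 / N := by positivity
  have hcN : (0:ℝ) < c₈ / N := by positivity
  have hup : vol μ y r ≤ vol μ z (r + e) := vol_mono' μ y z _ _ (by linarith)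
  have hlow : vol μ z (r - e) ≤ vol μ y r := vol_mono' μ z y _ _ (by rw [dist_comm]; linarith)
  have hdiff : ∀ s s', s ≤ s' → s' - s ≤ 2 * e → vol μ z s' ≤ vol μ z s + c₂ * (2 * e) := by
    intro s s' h1 h2
    have h3 := (le_abs_self _).trans (hB z s' s)
    rw [abs_of_nonneg (by linarith)] at h3
    have : c₂ * (s' - s) ≤ c₂ * (2 * e) := by gcongr
    linarith
  have hfin : N * (c₂ * (2 * e)) = 2 * c₂ * (c₈ + 1) := by rw [← hNe]; ring
  rw [abs_le]
  constructor
  · by_cases hrc : r < c₈ / N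
    · have h1 := hdiff 0 (r + e) (by linarith [hr.1]) (by linarith)
      rw [vol_zero'] at h1
      have h2 : N * vol μ y r ≤ N * (c₂ * (2 * e)) := by gcongr; linarith
      have h3 := count_nonneg D (ball y r)
      linarith
    · push Not at hrc
      set k := ⌊(N : ℝ) * (r - c₈ / N)⌋₊ with hk
      have hk1 : (k : ℝ) ≤ N * (r - c₈ / N) := Nat.floor_le (by
        apply mul_nonneg hN'.le; linarith)
      have hk2 : N * (r - c₈ / N) < k + 1 := Nat.lt_floor_add_one _
      have hs1 : (k : ℝ) / N ≤ r - c₈ / N := by rw [div_le_iff₀ hN']; linarith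
      have hs2 : r - c₈ / N ≤ (k : ℝ) / N + 1 / N := by
        rw [← add_div, le_div_iff₀ hN']; linarith
      have hkN : k < N := by
        have : (k : ℝ) / N < 1 := by linarith [hr.2]
        rw [div_lt_one hN'] at this
        exact_mod_cast this
      have h1 := (abs_le.mp (hD' k hkN)).1
      have h2 := hdiff ((k : ℝ) / N) (r + e) (by linarith) (by linarith)
      have h3 := count_mono D (ball_subset_ball' (x := z) (y := y) (ε₁ := (k : ℝ) / N) (ε₂ := r)
        (by rw [dist_comm]; linarith))
      have h4 : N * vol μ y r ≤ N * (vol μ z ((k : ℝ) / N) + c₂ * (2 * e)) := by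
        gcongr; linarith
      rw [mul_add] at h4
      linarith
  · set k := ⌈(N : ℝ) * (r + c₈ / N)⌉₊ with hk
    have hr0 := hr.1
    have hk1 : N * (r + c₈ / N) ≤ (k : ℝ) := Nat.le_ceil _
    have hk2 : (k : ℝ) < N * (r + c₈ / N) + 1 := Nat.ceil_lt_add_one (by positivity)
    have hs1 : r + c₈ / N ≤ (k : ℝ) / N := by rw [le_div_iff₀ hN']; linarith
    have hs2 : (k : ℝ) / N ≤ r + c₈ / N + 1 / N := by
      rw [← sub_le_iff_le_add, ← sub_div, div_le_iff₀ hN']; linarith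
    by_cases hkN : k < N
    · have h1 := (abs_le.mp (hD' k hkN)).2
      have h2 := hdiff (r - e) ((k : ℝ) / N) (by linarith) (by linarith)
      have h3 := count_mono D (ball_subset_ball' (x := y) (y := z) (ε₁ := r) (ε₂ := (k : ℝ) / N)
        (by linarith))
      have h4 : N * vol μ z ((k : ℝ) / N) ≤ N * (vol μ y r + c₂ * (2 * e)) := by
        gcongr; linarith
      rw [mul_add] at h4
      linarith
    · have hkN' : (N : ℝ) ≤ k := by exact_mod_cast not_lt.mp hkN
      have : 1 ≤ (k : ℝ) / N := by rw [le_div_iff₀ hN']; linarith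
      have h0 : vol μ z (r + e) = 1 := by
        unfold vol; rw [if_pos]; linarith
      have h2 := hdiff (r - e) (r + e) (by linarith) (by linarith)
      have h3 := count_le D (ball y r)
      have h4 : N * (1:ℝ) ≤ N * (vol μ y r + c₂ * (2 * e)) := by
        gcongr; linarith
      rw [mul_add] at h4
      linarith

theorem stmt11 {M : Type*} [MetricSpace M] [CompactSpace M] [ConnectedSpace M] [Nonempty M]
    [MeasurableSpace M] [BorelSpace M] (μ : Measure M) [IsProbabilityMeasure μ]
    (hdiam : Metric.diam (Set.univ : Set M) = 1)
    (d c₁ c₂ c₈ : ℝ) (hd : 0 < d) (hc₁ : 0 < c₁) (hc₂ : 0 < c₂) (hc₈ : 0 < c₈)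
    (hA : ∀ y : M, ∀ r ∈ Set.Icc (0:ℝ) 1,
      c₁⁻¹ * r ^ d ≤ vol μ y r ∧ vol μ y r ≤ c₁ * r ^ d)
    (hB : ∀ y : M, ∀ r₁ r₂ : ℝ, |vol μ y r₁ - vol μ y r₂| ≤ c₂ * |r₁ - r₂|)
    (hpart : ∃ m₀ : ℕ, ∀ m : ℕ, m₀ ≤ m → ∃ P : Fin m → Set M,
      (∀ j, MeasurableSet (P j)) ∧ Pairwise (Function.onFun Disjoint P) ∧
      (⋃ j, P j) = Set.univ ∧ (∀ j, μ (P j) = 1 / m) ∧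
      (∀ j, Metric.diam (P j) ≤ c₈ * (m : ℝ) ^ (-(1:ℝ)/d))) :
    ∃ c₆ : ℝ, 0 < c₆ ∧ ∀ N : ℕ, 2 ≤ N → ∃ D : Fin N → M,
      ∀ y : M, ∀ r ∈ Set.Icc (0:ℝ) 1,
        |(∑ i : Fin N, (Metric.ball y r).indicator 1 (D i) : ℝ) - N * vol μ y r|
          ≤ c₆ * (N : ℝ) ^ (1/2 - 1/(2*d)) * (Real.log N) ^ ((1:ℝ)/2) := by
  obtain ⟨m₀, hpart⟩ := hpart
  obtain ⟨y₀⟩ := ‹Nonempty M›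
  have hd1 : 1 ≤ d := one_le_d μ y₀ d c₁ c₂ hc₁ (fun r hr => (hA y₀ r hr).1) (hB y₀)
  set q : ℕ := ⌈d⌉₊ with hq
  have hqd : d ≤ q := Nat.le_ceil d
  have hq1 : 1 ≤ q := by
    have : (1:ℝ) ≤ q := hd1.trans hqd
    exact_mod_cast this
  set L : ℝ := (Real.log 2) ^ ((1:ℝ)/2) with hL
  have hlog2 : 0 < Real.log 2 := Real.log_pos (by norm_num)
  have hL0 : 0 < L := Real.rpow_pos_of_pos hlog2 _
  set C : ℝ := Real.sqrt (2 * c₂ * c₈ * (q + 3)) with hC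
  have hC0 : 0 < C := Real.sqrt_pos.mpr (by positivity)
  refine ⟨C + 2 * c₂ * (c₈ + 1) / L + m₀ / L, by positivity, fun N hN => ?_⟩
  have hN0 : 0 < N := by omega
  have hNr : (2:ℝ) ≤ N := by exact_mod_cast hN
  have hN' : (0:ℝ) < N := by linarith
  have hlogN : Real.log 2 ≤ Real.log N := Real.log_le_log (by norm_num) hNr
  set E : ℝ := (N : ℝ) ^ (1/2 - 1/(2*d)) * (Real.log N) ^ ((1:ℝ)/2) with hE
  have hexp : 0 ≤ 1/2 - 1/(2*d) := by
    rw [sub_nonneg]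
    apply one_div_le_one_div_of_le <;> linarith
  have hLE : L ≤ E := by
    have h1 : 1 ≤ (N : ℝ) ^ (1/2 - 1/(2*d)) := Real.one_le_rpow (by linarith) hexp
    have h2 : L ≤ (Real.log N) ^ ((1:ℝ)/2) := Real.rpow_le_rpow hlog2.le hlogN (by norm_num)
    calc L = 1 * L := (one_mul _).symm
      _ ≤ E := by rw [hE]; gcongr
  have hE0 : 0 < E := hL0.trans_le hLE
  have hrhs : ∀ c : ℝ, c * (N : ℝ) ^ (1/2 - 1/(2*d)) * (Real.log N) ^ ((1:ℝ)/2) = c * E := by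
    intro c; rw [hE]; ring
  have hdivL : ∀ a : ℝ, 0 ≤ a → a ≤ a / L * E := by
    intro a ha
    rw [div_mul_eq_mul_div, le_div_iff₀ hL0]
    gcongr
  simp only [hrhs]
  by_cases hNm : N < m₀
  · refine ⟨fun _ => y₀, fun y r hr => ?_⟩
    have h1 := count_le (fun _ : Fin N => y₀) (ball y r)
    have h2 := count_nonneg (fun _ : Fin N => y₀) (ball y r)
    have h3 : N * vol μ y r ≤ N * 1 := by gcongr; exact vol_le_one' μ y r
    have h4 : 0 ≤ N * vol μ y r := by
      apply mul_nonneg hN'.le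
      refine le_trans measureReal_nonneg (real_ball_le_vol μ y r)
    have h5 : (N : ℝ) ≤ m₀ := by exact_mod_cast hNm.le
    have h6 := hdivL m₀ (by positivity)
    have h7 : 0 ≤ (C + 2 * c₂ * (c₈ + 1) / L) * E := by positivity
    rw [add_mul]
    rw [abs_le]
    constructor <;> linarith
  push Not at hNm
  obtain ⟨P, hP, hdis, hU, hμ, hPd⟩ := hpart N hNm
  set δ : ℝ := c₈ * (N : ℝ) ^ (-(1:ℝ)/d) with hδ
  have hδ0 : 0 < δ := by positivity
  obtain ⟨Q, -, -, hQU, hQμ, hQd⟩ := hpart (N ^ q) (hNm.trans (Nat.le_self_pow (by omega) N))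
  have hQne : ∀ j, (Q j).Nonempty := by
    intro j
    apply nonempty_of_measure_ne_zero (μ := μ)
    rw [hQμ]
    simp
  choose z hz using hQne
  set K : ℝ := N * (2 * c₂ * δ) with hK
  have hK0 : 0 < K := by positivity
  set t : ℝ := C * E with ht
  have ht0 : 0 < t := by positivity
  have ht2 : t ^ 2 = (q + 3) * K * Real.log N := by
    have h1 : ((N : ℝ) ^ (1/2 - 1/(2*d))) ^ 2 = N * (N : ℝ) ^ (-(1:ℝ)/d) := by
      rw [← Real.rpow_natCast, ← Real.rpow_mul hN'.le]
      nth_rewrite 2 [← Real.rpow_one (N : ℝ)]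
      rw [← Real.rpow_add hN']
      congr 1
      push_cast
      field_simp
      ring
    have h2 : ((Real.log N) ^ ((1:ℝ)/2)) ^ 2 = Real.log N := by
      rw [← Real.sqrt_eq_rpow, Real.sq_sqrt (by linarith)]
    rw [ht, hE, mul_pow, mul_pow, h1, h2, hC, Real.sq_sqrt (by positivity), hK, hδ]
    ring
  obtain ⟨D, hD⟩ := disc_exists μ hN0 P hP hdis hU hμ
    (G := Fin (N ^ q) × Fin N) (fun g => ball (z g.1) ((g.2 : ℝ) / N))
    (fun g => measurableSet_ball) K t ht0
    (fun g => by
      have := card_cut μ c₂ δ hδ0 hB hN0 P hP hdis hμ hPd (z g.1) ((g.2 : ℝ) / N) (by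
        rw [div_le_one hN']; exact_mod_cast g.2.2.le)
      exact this)
    (by
      have h1 : -2 * t ^ 2 / K = -(2 * ((q + 3) * Real.log N)) := by
        rw [ht2]; field_simp
      have h2 : Real.exp (-2 * t ^ 2 / K) ≤ ((N : ℝ) ^ (q + 3))⁻¹ := by
        rw [h1, Real.exp_neg]
        apply inv_anti₀ (by positivity)
        rw [← Real.exp_log (show (0:ℝ) < (N:ℝ) ^ (q + 3) by positivity), Real.log_pow]
        apply Real.exp_le_exp.mpr
        push_cast
        have : 0 ≤ ((q:ℝ) + 3) * Real.log N := by
          apply mul_nonneg (by positivity); linarith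
        linarith
      simp only [Fintype.card_prod, Fintype.card_fin]
      push_cast
      calc (N:ℝ) ^ q * N * (2 * Real.exp (-2 * t ^ 2 / K))
          ≤ (N:ℝ) ^ q * N * (N * ((N : ℝ) ^ (q + 3))⁻¹) := by gcongr
        _ = (N:ℝ)⁻¹ := by field_simp; try ring
        _ < 1 := inv_lt_one_of_one_lt₀ (by linarith))
  refine ⟨D, fun y r hr => ?_⟩
  obtain ⟨i, hi⟩ : ∃ i, y ∈ Q i := by
    have : y ∈ ⋃ j, Q j := by rw [hQU]; trivial
    exact mem_iUnion.mp this
  have hyz : dist y (z i) ≤ c₈ / N := by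
    refine (dist_le_diam_of_mem isBounded_of_compactSpace hi (hz i)).trans ((hQd i).trans ?_)
    rw [div_eq_mul_inv c₈ (N : ℝ)]
    apply mul_le_mul_of_nonneg_left _ hc₈.le
    push_cast
    rw [← Real.rpow_natCast, ← Real.rpow_mul hN'.le, ← Real.rpow_neg_one]
    apply Real.rpow_le_rpow_of_exponent_le (by linarith)
    rw [mul_div_assoc', div_le_iff₀ hd]
    linarith
  have h1 := sandwich μ c₂ c₈ t hc₂ hc₈ ht0 hB hN0 D y (z i) hyz (fun k => hD (i, k)) r hr
  have h2 := hdivL (2 * c₂ * (c₈ + 1)) (by positivity)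
  have h3 : 0 ≤ (m₀ : ℝ) / L * E := by positivity
  rw [add_mul, add_mul]
  linarith
end
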